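/- Let d, N₁, N₂ be positive integers, q ∈ ℝ^d a query vector, K₁ ∈ ℝ^{N₁×d}, K₂ ∈ ℝ^{N₂×d} key matrices, and V₁ ∈ ℝ^{N₁×d}, V₂ ∈ ℝ^{N₂×d} value matrices. Write softmax(qᵀ[K₁;K₂]ᵀ) = [s₁ᵀ, s₂ᵀ] with s₁ ∈ ℝ^{N₁}, s₂ ∈ ℝ^{N₂}, and write softmax(qᵀK₁ᵀ) = s̃₁ᵀ with s̃₁ ∈ ℝ^{N₁}. Then ‖softmax(qᵀK₁ᵀ)V₁ − softmax(qᵀ[K₁;K₂]ᵀ)[V₁ᵀ, V₂ᵀ]ᵀ‖₂ = ‖s̃₁ᵀV₁ − s₁ᵀV₁ − s₂ᵀV₂‖₂ ≤ 2‖s₂‖₁ · max{‖V₁‖_{2,∞}, ‖V₂‖_{2,∞}}. -/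

import Mathlib

/-!
Attention over both blocks is a convex combination `o = (1 - σ) o₁ + σ o₂` of the attention over
each block separately, where `σ = ‖s₂‖₁` is the softmax mass of the second block. Hence
`o₁ - o = σ (o₁ - o₂)`, and each `oᵢ`, being a convex combination of the rows of `Vᵢ`, has norm at
most `‖Vᵢ‖_{2,∞}`.
-/

open scoped BigOperators

/-- Euclidean (ℓ₂) norm of a finite real vector. -/
noncomputable def l2norm {n : ℕ} (v : Fin n → ℝ) : ℝ :=
  Real.sqrt (∑ i, v i ^ 2)

section Softmax

variable {ι κ : Type*} [Fintype ι] [Fintype κ]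

/-- The softmax of a finite family of real scores. -/
noncomputable def softmax (z : ι → ℝ) (i : ι) : ℝ :=
  Real.exp (z i) / ∑ j, Real.exp (z j)

lemma softmax_nonneg (z : ι → ℝ) (i : ι) : 0 ≤ softmax z i := by
  unfold softmax
  positivity

lemma sum_softmax [Nonempty ι] (z : ι → ℝ) : ∑ i, softmax z i = 1 := by
  have total_pos : 0 < ∑ i, Real.exp (z i) := by positivity
  simp only [softmax, ← Finset.sum_div, div_self total_pos.ne']

lemma softmax_apply_eq_sum_mul_softmax_comp (z : ι → ℝ) (f : κ → ι) (j : κ) :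
    softmax z (f j) = (∑ k, softmax z (f k)) * softmax (z ∘ f) j := by
  have : Nonempty κ := ⟨j⟩
  have block_pos : 0 < ∑ k, Real.exp (z (f k)) := by positivity
  simp only [softmax, ← Finset.sum_div, Function.comp_apply]
  rw [mul_comm, div_mul_div_cancel₀ block_pos.ne']

variable {E : Type*}

/-- The attention output for scores `z` and values `v`: the softmax-weighted average of the values,
which may lie in any real vector space. -/
noncomputable def attention [AddCommGroup E] [Module ℝ E] (z : ι → ℝ) (v : ι → E) : E :=
  ∑ i, softmax z i • v i

lemma sum_softmax_smul_eq_smul_attention [AddCommGroup E] [Module ℝ E]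
    (z : ι → ℝ) (f : κ → ι) (v : κ → E) :
    ∑ j, softmax z (f j) • v j = (∑ j, softmax z (f j)) • attention (z ∘ f) v := by
  rw [attention, Finset.smul_sum]
  refine Finset.sum_congr rfl fun j _ => ?_
  rw [smul_smul, ← softmax_apply_eq_sum_mul_softmax_comp]

lemma attention_sumElim [AddCommGroup E] [Module ℝ E]
    (z₁ : ι → ℝ) (z₂ : κ → ℝ) (v₁ : ι → E) (v₂ : κ → E) :
    attention (Sum.elim z₁ z₂) (Sum.elim v₁ v₂) =
      (∑ i, softmax (Sum.elim z₁ z₂) (Sum.inl i)) • attention z₁ v₁ +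
        (∑ j, softmax (Sum.elim z₁ z₂) (Sum.inr j)) • attention z₂ v₂ := by
  rw [attention, Fintype.sum_sum_type]
  exact congrArg₂ (· + ·) (sum_softmax_smul_eq_smul_attention _ Sum.inl v₁)
    (sum_softmax_smul_eq_smul_attention _ Sum.inr v₂)

lemma attention_sub_attention_sumElim [Nonempty ι] [AddCommGroup E] [Module ℝ E]
    (z₁ : ι → ℝ) (z₂ : κ → ℝ) (v₁ : ι → E) (v₂ : κ → E) :
    attention z₁ v₁ - attention (Sum.elim z₁ z₂) (Sum.elim v₁ v₂) =
      (∑ j, softmax (Sum.elim z₁ z₂) (Sum.inr j)) • (attention z₁ v₁ - attention z₂ v₂) := by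
  have mass_add : ∑ i, softmax (Sum.elim z₁ z₂) (Sum.inl i) +
      ∑ j, softmax (Sum.elim z₁ z₂) (Sum.inr j) = 1 := by
    rw [← Fintype.sum_sum_type, sum_softmax]
  rw [attention_sumElim, eq_sub_of_add_eq mass_add]
  module

lemma norm_attention_le_iSup_norm [Nonempty ι] [SeminormedAddCommGroup E] [NormedSpace ℝ E]
    (z : ι → ℝ) (v : ι → E) : ‖attention z v‖ ≤ ⨆ i, ‖v i‖ := by
  have attention_mem : attention z v ∈ Metric.closedBall 0 (⨆ i, ‖v i‖) :=
    (convex_closedBall 0 _).sum_mem (fun i _ => softmax_nonneg z i) (sum_softmax z) fun i _ =>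
      mem_closedBall_zero_iff.2 <| le_ciSup (Set.finite_range fun i => ‖v i‖).bddAbove i
  exact mem_closedBall_zero_iff.1 attention_mem

theorem attention_sink_general [Nonempty ι] [Nonempty κ]
    [SeminormedAddCommGroup E] [NormedSpace ℝ E]
    (z₁ : ι → ℝ) (z₂ : κ → ℝ) (v₁ : ι → E) (v₂ : κ → E) :
    ‖attention z₁ v₁ - attention (Sum.elim z₁ z₂) (Sum.elim v₁ v₂)‖ ≤
      2 * (∑ j, |softmax (Sum.elim z₁ z₂) (Sum.inr j)|) *
        max (⨆ i, ‖v₁ i‖) (⨆ j, ‖v₂ j‖) := by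
  simp only [abs_of_nonneg (softmax_nonneg _ _)]
  set σ := ∑ j, softmax (Sum.elim z₁ z₂) (Sum.inr j)
  set M := max (⨆ i, ‖v₁ i‖) (⨆ j, ‖v₂ j‖)
  have mass_nonneg : 0 ≤ σ := Finset.sum_nonneg fun j _ => softmax_nonneg _ _
  have norm_left : ‖attention z₁ v₁‖ ≤ M :=
    (norm_attention_le_iSup_norm z₁ v₁).trans (le_max_left _ _)
  have norm_right : ‖attention z₂ v₂‖ ≤ M :=
    (norm_attention_le_iSup_norm z₂ v₂).trans (le_max_right _ _)
  calc ‖attention z₁ v₁ - attention (Sum.elim z₁ z₂) (Sum.elim v₁ v₂)‖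
      = σ * ‖attention z₁ v₁ - attention z₂ v₂‖ := by
        rw [attention_sub_attention_sumElim, norm_smul_of_nonneg mass_nonneg]
    _ ≤ σ * (M + M) := by
        gcongr
        exact norm_sub_le_of_le norm_left norm_right
    _ = 2 * σ * M := by ring

end Softmax

lemma l2norm_eq_norm_toLp {n : ℕ} (v : Fin n → ℝ) : l2norm v = ‖WithLp.toLp 2 v‖ := by
  simp only [l2norm, EuclideanSpace.norm_eq, Real.norm_eq_abs, sq_abs]

/-- **Attention sink lemma.** Dropping the second block of keys/values changes the
attention output by at most `2‖s₂‖₁ · max{‖V₁‖_{2,∞}, ‖V₂‖_{2,∞}}`. -/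
theorem attention_sink
    (d N₁ N₂ : ℕ) (hd : 0 < d) (hN₁ : 0 < N₁) (hN₂ : 0 < N₂)
    (q : Fin d → ℝ)
    (K₁ : Matrix (Fin N₁) (Fin d) ℝ) (K₂ : Matrix (Fin N₂) (Fin d) ℝ)
    (V₁ : Matrix (Fin N₁) (Fin d) ℝ) (V₂ : Matrix (Fin N₂) (Fin d) ℝ)
    -- `[s₁ᵀ, s₂ᵀ] = softmax(qᵀ[K₁;K₂]ᵀ)`
    (s₁ : Fin N₁ → ℝ)
    (hs₁ : s₁ = fun j => Real.exp (∑ a, q a * K₁ j a) /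
      ((∑ l, Real.exp (∑ a, q a * K₁ l a)) + (∑ l, Real.exp (∑ a, q a * K₂ l a))))
    (s₂ : Fin N₂ → ℝ)
    (hs₂ : s₂ = fun j => Real.exp (∑ a, q a * K₂ j a) /
      ((∑ l, Real.exp (∑ a, q a * K₁ l a)) + (∑ l, Real.exp (∑ a, q a * K₂ l a))))
    -- `s₁tildeᵀ = softmax(qᵀK₁ᵀ)`
    (s₁tilde : Fin N₁ → ℝ)
    (hs₁tilde : s₁tilde = fun j => Real.exp (∑ a, q a * K₁ j a) /
      (∑ l, Real.exp (∑ a, q a * K₁ l a))) :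
    l2norm (fun i => (∑ j, s₁tilde j * V₁ j i) -
        ((∑ j, s₁ j * V₁ j i) + (∑ j, s₂ j * V₂ j i)))
      ≤ 2 * (∑ j, |s₂ j|) * max (⨆ j, l2norm (V₁ j)) (⨆ j, l2norm (V₂ j)) := by
  have := Fin.pos_iff_nonempty.1 hN₁
  have := Fin.pos_iff_nonempty.1 hN₂
  subst hs₁ hs₂ hs₁tilde
  convert attention_sink_general (fun j => ∑ a, q a * K₁ j a) (fun j => ∑ a, q a * K₂ j a)
    (fun j => WithLp.toLp 2 (V₁ j)) (fun j => WithLp.toLp 2 (V₂ j)) using 1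
  · rw [l2norm_eq_norm_toLp]
    congr 1
    ext i
    simp [attention, softmax]
  · simp [softmax, l2norm_eq_norm_toLp]
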